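/- There exist positive constants C₁(k) and C₂(k) for k = 2, …, s, depending only on k and not on N, K, u, w, or the coefficients a_k, such that for all u, w ∈ U: |T(u, w)| ≤ [ Σ_{k=2}^{s} ε² C₁(k) |a_k| ‖D³u‖_{ℓ²_ε(C̃_qnl(k))} + Σ_{k=2}^{s} ε C₂(k) |a_k| √(2sε) ‖D²u‖_{ℓ∞(I_qnl(k))} ] · ‖Dw‖_{ℓ²_ε}. -/

import Mathlib

/-! The form `T` splits over `k`. For fixed `k`, unwrap the continuum set by periodicity into one
interval `[A, B] = [K+2, 2N-K-k]`, and write `U = Du`, `W = Dw`. Each summand then is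
`∑_{j,t < k} ∑_{n ∈ [A, B]} (U_{n+j} - U_{n+t}) W_{n+j}`; symmetrizing in `(j, t)` turns it into
half the sum of `∑_n (U_{n+j} - U_{n+t}) (W_{n+j} - W_{n+t})`.

With `i = j - t > 0` and `G_m = U_{m+i} - U_m`, a summation by parts leaves the interior terms
`(G_{m-i} - G_m) W_m`, which are second differences of `U`, hence of order `ε² D³u`, and at most
`i` boundary terms at either end of the interval, of the form `G_m W_m` or `G_{m-i} W_m` with `m`
in the interface. In the boundary terms the first differences of `U` are compared with the one at
`m` itself, at the cost of further second differences, which all stay inside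
`[A, B+k-1] = [K+2, 2N-K-1]`; modulo `2N` this is the extended continuum region.
Cauchy–Schwarz finishes the estimate (`pair_bound`, `arc_bound`).
-/

open Finset Real

noncomputable section

/-- scaled lattice spacing ε = 1/N -/
def eps (N : ℕ) : ℝ := 1 / N

/-- the index range ℓ = -N+1, …, N -/
def rng (N : ℕ) : Finset ℤ := Finset.Icc (-(N : ℤ) + 1) N

/-- 2N-periodicity of a sequence -/
def Periodic2N (N : ℕ) (u : ℤ → ℝ) : Prop := ∀ ℓ : ℤ, u (ℓ + 2 * (N : ℤ)) = u ℓ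

/-- the space 𝒰 of 2N-periodic zero-mean displacements -/
def memU (N : ℕ) (u : ℤ → ℝ) : Prop :=
  Periodic2N N u ∧ ∑ ℓ ∈ rng N, u ℓ = 0

/-- discrete differentiation operator: (Dv)_ℓ = (v_ℓ - v_{ℓ-1})/ε -/
def Dv (N : ℕ) (v : ℤ → ℝ) : ℤ → ℝ := fun ℓ => (v ℓ - v (ℓ - 1)) / eps N

/-- squared discrete ℓ²_ε norm -/
def nsq (N : ℕ) (v : ℤ → ℝ) : ℝ := eps N * ∑ ℓ ∈ rng N, v ℓ ^ 2

/-- discrete ℓ²_ε norm -/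
def nrm (N : ℕ) (v : ℤ → ℝ) : ℝ := Real.sqrt (nsq N v)

/-- squared discrete ℓ²_ε seminorm over an index set S -/
def nsqS (N : ℕ) (S : Finset ℤ) (v : ℤ → ℝ) : ℝ := eps N * ∑ ℓ ∈ S, v ℓ ^ 2

/-- discrete ℓ²_ε seminorm over an index set S -/
def nrmS (N : ℕ) (S : Finset ℤ) (v : ℤ → ℝ) : ℝ := Real.sqrt (nsqS N S v)

/-- discrete ℓ^∞ norm over an index set S -/
def linf (S : Finset ℤ) (v : ℤ → ℝ) : ℝ := sSup ((fun ℓ => |v ℓ|) '' (S : Set ℤ))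

/-- the interfacial index set 𝒜_qnl(k) -/
def Aqnl (K : ℤ) (k : ℕ) : Finset ℤ := Finset.Icc (-K - (k : ℤ) + 1) (K + 1)

/-- the continuum index set 𝒞_qnl(k) -/
def Cqnl (N : ℕ) (K : ℤ) (k : ℕ) : Finset ℤ :=
  Finset.Icc (-(N : ℤ) + 1) (-K - (k : ℤ)) ∪ Finset.Icc (K + 2) (N : ℤ)

/-- the interface ℐ_qnl(k) between continuum and atomistic regions -/
def Iqnl (K : ℤ) (k : ℕ) : Finset ℤ :=
  Finset.Icc (-K - (k : ℤ) + 1) (-K - 1) ∪ Finset.Icc (K + 2) (K + (k : ℤ))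

/-- the extended continuum region 𝒞̃_qnl(k) = 𝒞_qnl(k) ∪ ℐ_qnl(k) -/
def Ctil (N : ℕ) (K : ℤ) (k : ℕ) : Finset ℤ := Cqnl N K k ∪ Iqnl K k

/-- the s-th nearest-neighbor atomistic Hessian bilinear form -/
def Ba (N s : ℕ) (a : ℕ → ℝ) (u w : ℤ → ℝ) : ℝ :=
  eps N * ∑ ℓ ∈ rng N, ∑ k ∈ Finset.Icc 1 s,
    a k * (∑ j ∈ Finset.range k, Dv N u (ℓ + (j : ℤ)))
        * (∑ j ∈ Finset.range k, Dv N w (ℓ + (j : ℤ)))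

/-- the s-th nearest-neighbor QNL Hessian bilinear form -/
def Bqnl (N s : ℕ) (K : ℤ) (a : ℕ → ℝ) (u w : ℤ → ℝ) : ℝ :=
  eps N * ∑ ℓ ∈ rng N, a 1 * Dv N u ℓ * Dv N w ℓ
    + eps N * ∑ k ∈ Finset.Icc 2 s,
        ((∑ ℓ ∈ Aqnl K k,
            a k * (∑ j ∈ Finset.range k, Dv N u (ℓ + (j : ℤ)))
                * (∑ j ∈ Finset.range k, Dv N w (ℓ + (j : ℤ))))
          + ∑ ℓ ∈ Cqnl N K k,
              (k : ℝ) * a k * ∑ j ∈ Finset.range k, Dv N u (ℓ + (j : ℤ)) * Dv N w (ℓ + (j : ℤ)))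

/-- the linearized consistency-error bilinear form -/
def Tconsist (N s : ℕ) (K : ℤ) (a : ℕ → ℝ) (u w : ℤ → ℝ) : ℝ :=
  eps N * ∑ k ∈ Finset.Icc 2 s, a k * ∑ ℓ ∈ Cqnl N K k, ∑ j ∈ Finset.range k,
    ((k : ℝ) * Dv N u (ℓ + (j : ℤ)) - ∑ t ∈ Finset.range k, Dv N u (ℓ + (t : ℤ)))
      * Dv N w (ℓ + (j : ℤ))

/-! ### Finite sums over integer intervals -/

lemma sum_Icc_split (f : ℤ → ℝ) {a b c : ℤ} (h1 : a ≤ b + 1) (h2 : b ≤ c) :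
    ∑ m ∈ Icc a c, f m = ∑ m ∈ Icc a b, f m + ∑ m ∈ Icc (b + 1) c, f m := by
  rw [← Finset.sum_union]
  · congr 1
    ext x
    simp only [mem_union, mem_Icc]
    omega
  · rw [Finset.disjoint_left]
    intro x
    simp only [mem_Icc]
    omega

lemma sum_Icc_shift (f : ℤ → ℝ) (a b h : ℤ) :
    ∑ m ∈ Icc a b, f (m + h) = ∑ m ∈ Icc (a + h) (b + h), f m := by
  rw [← Finset.map_add_right_Icc, Finset.sum_map]
  rfl

lemma tele {U V : ℤ → ℝ} (hV : ∀ m, V m = U m - U (m - 1)) (m : ℤ) (i : ℕ) :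
    U (m + i) - U m = ∑ p ∈ range i, V (m + 1 + p) := by
  induction i with
  | zero => simp
  | succ i ih =>
    rw [Finset.sum_range_succ, ← ih, hV]
    have e1 : m + 1 + (i : ℤ) - 1 = m + i := by ring
    have e2 : m + ((i + 1 : ℕ) : ℤ) = m + 1 + i := by push_cast; ring
    rw [e1, e2]
    ring

/-- Cauchy–Schwarz for a shifted sequence, with both windows enlarged to `[A, E]`. -/
lemma cs_shift (Z W : ℤ → ℝ) {A E a b h : ℤ} (ha : A ≤ a) (hb : b ≤ E)
    (ha' : A ≤ a + h) (hb' : b + h ≤ E) :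
    ∑ m ∈ Icc a b, |Z (m + h)| * |W m| ≤
      √(∑ m ∈ Icc A E, Z m ^ 2) * √(∑ m ∈ Icc A E, W m ^ 2) := by
  refine (Real.sum_mul_le_sqrt_mul_sqrt _ _ _).trans ?_
  simp only [sq_abs]
  gcongr
  rw [sum_Icc_shift (fun m => Z m ^ 2)]
  exact Finset.sum_le_sum_of_subset_of_nonneg (Icc_subset_Icc ha' hb') fun _ _ _ => sq_nonneg _

/-- Cauchy–Schwarz over a short interval on which `V` is bounded by `M`. -/
lemma cs_short (V W : ℤ → ℝ) {A E a b : ℤ} {M : ℝ} {k : ℕ} (hM : ∀ m ∈ Icc a b, |V m| ≤ M)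
    (hM0 : 0 ≤ M) (hk : b + 1 - a ≤ k) (ha : A ≤ a) (hb : b ≤ E) :
    ∑ m ∈ Icc a b, |V m| * |W m| ≤ M * √k * √(∑ m ∈ Icc A E, W m ^ 2) := by
  refine (Real.sum_mul_le_sqrt_mul_sqrt _ _ _).trans ?_
  simp only [sq_abs]
  have h1 : ∑ m ∈ Icc a b, V m ^ 2 ≤ M ^ 2 * k := by
    calc ∑ m ∈ Icc a b, V m ^ 2 ≤ ∑ m ∈ Icc a b, M ^ 2 := by
          refine Finset.sum_le_sum fun m hm => ?_
          rw [← sq_abs]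
          exact pow_le_pow_left₀ (abs_nonneg _) (hM m hm) 2
      _ = ((Icc a b).card : ℝ) * M ^ 2 := by simp
      _ ≤ k * M ^ 2 := by
          gcongr
          rw [Int.card_Icc]
          omega
      _ = M ^ 2 * k := mul_comm _ _
  have h2 : √(∑ m ∈ Icc a b, V m ^ 2) ≤ M * √k := by
    refine (Real.sqrt_le_sqrt h1).trans ?_
    rw [Real.sqrt_mul (sq_nonneg M), Real.sqrt_sq hM0]
  gcongr

/-- If `F` is controlled by `c |V|` plus `i²` shifted copies of `|Z|`, all of whose windows lie in
`[A, E]`, then so is its pairing with `W`. -/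
lemma pairing_bound (F V Z W : ℤ → ℝ) {A E a b : ℤ} {c : ℝ} (i : ℕ) (h : ℕ → ℕ → ℤ)
    (ha : A ≤ a) (hb : b ≤ E)
    (hh : ∀ p < i, ∀ q < i, A ≤ a + h p q ∧ b + h p q ≤ E)
    (hF : ∀ m ∈ Icc a b,
      |F m| ≤ c * |V m| + ∑ p ∈ range i, ∑ q ∈ range i, |Z (m + h p q)|) :
    |∑ m ∈ Icc a b, F m * W m| ≤ c * ∑ m ∈ Icc a b, |V m| * |W m| +
      (i : ℝ) ^ 2 * (√(∑ m ∈ Icc A E, Z m ^ 2) * √(∑ m ∈ Icc A E, W m ^ 2)) := by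
  calc |∑ m ∈ Icc a b, F m * W m| ≤ ∑ m ∈ Icc a b, |F m| * |W m| := by
        refine (Finset.abs_sum_le_sum_abs _ _).trans_eq ?_
        simp only [abs_mul]
    _ ≤ ∑ m ∈ Icc a b,
          (c * |V m| + ∑ p ∈ range i, ∑ q ∈ range i, |Z (m + h p q)|) * |W m| := by
        refine Finset.sum_le_sum fun m hm => ?_
        exact mul_le_mul_of_nonneg_right (hF m hm) (abs_nonneg _)
    _ = c * ∑ m ∈ Icc a b, |V m| * |W m| +
          ∑ p ∈ range i, ∑ q ∈ range i, ∑ m ∈ Icc a b, |Z (m + h p q)| * |W m| := by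
        simp only [add_mul, Finset.sum_add_distrib, Finset.sum_mul, Finset.mul_sum, mul_assoc]
        congr 1
        rw [Finset.sum_comm]
        refine Finset.sum_congr rfl fun p _ => ?_
        rw [Finset.sum_comm]
    _ ≤ c * ∑ m ∈ Icc a b, |V m| * |W m| + ∑ p ∈ range i, ∑ q ∈ range i,
          √(∑ m ∈ Icc A E, Z m ^ 2) * √(∑ m ∈ Icc A E, W m ^ 2) := by
        gcongr with p hp q hq
        have := hh p (mem_range.1 hp) q (mem_range.1 hq)
        exact cs_shift Z W ha hb this.1 this.2
    _ = _ := by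
        simp only [Finset.sum_const, card_range, nsmul_eq_mul]
        ring

/-! ### Estimates on an interval -/

/-- The summation-by-parts estimate for one pair `(t + i, t)`: `V` and `Z` are the first and
second differences of `U`, and `M` bounds `V` on the interfaces at both ends of the interval. -/
lemma pair_bound (U V Z W : ℤ → ℝ) (hV : ∀ m, V m = U m - U (m - 1))
    (hZ : ∀ m, Z m = V m - V (m - 1)) (A B : ℤ) (k t i : ℕ) (hk : t + i < k)
    (hL : A + i ≤ B + 1) (M : ℝ) (hM0 : 0 ≤ M)
    (hM1 : ∀ m, A ≤ m → m + 2 ≤ A + k → |V m| ≤ M)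
    (hM2 : ∀ m, B + 1 ≤ m → m + 1 ≤ B + k → |V m| ≤ M) :
    |∑ n ∈ Icc A B, (U (n + t + i) - U (n + t)) * (W (n + t + i) - W (n + t))| ≤
      3 * (k : ℝ) ^ 2 * (√(∑ m ∈ Icc A (B + k - 1), Z m ^ 2) *
        √(∑ m ∈ Icc A (B + k - 1), W m ^ 2)) +
      2 * k * (M * √k * √(∑ m ∈ Icc A (B + k - 1), W m ^ 2)) := by
  set zn := √(∑ m ∈ Icc A (B + k - 1), Z m ^ 2)
  set wn := √(∑ m ∈ Icc A (B + k - 1), W m ^ 2)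
  have hsplit : ∑ n ∈ Icc A B, (U (n + t + i) - U (n + t)) * (W (n + t + i) - W (n + t)) =
      ∑ m ∈ Icc (A + t + i) (B + t), ((U m - U (m - i)) - (U (m + i) - U m)) * W m
      + ∑ m ∈ Icc (B + t + 1) (B + t + i), (U m - U (m - i)) * W m
      - ∑ m ∈ Icc (A + t) (A + t + i - 1), (U (m + i) - U m) * W m := by
    have e1 : ∑ n ∈ Icc A B, (U (n + t + i) - U (n + t)) * W (n + t + i) =
        ∑ m ∈ Icc (A + t + i) (B + t + i), (U m - U (m - i)) * W m := by
      rw [← sum_Icc_shift, ← sum_Icc_shift (fun m => (U (m + i) - U (m + i - i)) * W (m + i))]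
      simp
    have e2 : ∑ n ∈ Icc A B, (U (n + t + i) - U (n + t)) * W (n + t) =
        ∑ m ∈ Icc (A + t) (B + t), (U (m + i) - U m) * W m := by
      rw [← sum_Icc_shift]
    simp only [mul_sub, Finset.sum_sub_distrib] at e1 e2 ⊢
    rw [e1, e2, sum_Icc_split _ (a := A + t + i) (b := B + t) (by omega) (by omega),
      sum_Icc_split _ (a := A + t) (b := A + t + i - 1) (c := B + t) (by omega) (by omega)]
    simp only [sub_add_cancel, sub_mul, Finset.sum_sub_distrib]
    ring
  have hik : (i : ℝ) ≤ k := by exact_mod_cast (by omega : i ≤ k)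
  have hU : ∀ m : ℤ, U m - U (m - i) = ∑ p ∈ range i, V (m - i + 1 + p) := fun m => by
    rw [← tele hV, sub_add_cancel]
  have hin : |∑ m ∈ Icc (A + t + i) (B + t), ((U m - U (m - i)) - (U (m + i) - U m)) * W m|
      ≤ (i : ℝ) ^ 2 * (zn * wn) := by
    have := pairing_bound (fun m => (U m - U (m - i)) - (U (m + i) - U m)) V Z W
      (A := A) (E := B + k - 1) (a := A + t + i) (b := B + t) (c := 0) i
      (fun p q => -i + 2 + p + q) (by omega) (by omega) (by intros; omega) (by
        intro m _
        rw [hU, tele hV, ← Finset.sum_sub_distrib, zero_mul, zero_add]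
        refine (Finset.abs_sum_le_sum_abs _ _).trans (Finset.sum_le_sum fun p _ => ?_)
        have e : m + 1 + (p : ℤ) = (m - i + 1 + p) + i := by ring
        rw [abs_sub_comm, e, tele hZ]
        refine (Finset.abs_sum_le_sum_abs _ _).trans_eq (Finset.sum_congr rfl fun q _ => ?_)
        congr 2
        ring)
    simpa using this
  have hleft : |∑ m ∈ Icc (A + t) (A + t + i - 1), (U (m + i) - U m) * W m|
      ≤ i * (M * √k * wn) + (i : ℝ) ^ 2 * (zn * wn) := by
    refine (pairing_bound (fun m => U (m + i) - U m) V Z W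
      (A := A) (E := B + k - 1) (c := i) i
      (fun p q => 1 + q) (by omega) (by omega) (by intros; omega) ?_).trans ?_
    · intro m _
      rw [tele hV]
      have : (i : ℝ) * |V m| = ∑ p ∈ range i, |V m| := by simp
      rw [this, ← Finset.sum_add_distrib]
      refine (Finset.abs_sum_le_sum_abs _ _).trans (Finset.sum_le_sum fun p hp => ?_)
      have h1 := tele hZ m (p + 1)
      have e : m + ((p + 1 : ℕ) : ℤ) = m + 1 + p := by push_cast; ring
      rw [e, sub_eq_iff_eq_add'] at h1
      rw [h1]
      refine (abs_add_le _ _).trans ?_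
      gcongr
      refine (Finset.abs_sum_le_sum_abs _ _).trans ?_
      simp only [add_assoc]
      refine Finset.sum_le_sum_of_subset_of_nonneg ?_ fun _ _ _ => abs_nonneg _
      exact Finset.range_subset_range.2 (mem_range.1 hp)
    · gcongr
      refine cs_short V W ?_ hM0 (by omega) (by omega) (by omega)
      intro m hm
      rw [mem_Icc] at hm
      exact hM1 m (by omega) (by omega)
  have hright : |∑ m ∈ Icc (B + t + 1) (B + t + i), (U m - U (m - i)) * W m|
      ≤ i * (M * √k * wn) + (i : ℝ) ^ 2 * (zn * wn) := by
    refine (pairing_bound (fun m => U m - U (m - i)) V Z W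
      (A := A) (E := B + k - 1) (c := i) i
      (fun p q => -q) (by omega) (by omega) (by intros; omega) ?_).trans ?_
    · intro m _
      rw [hU, ← Finset.sum_range_reflect]
      have : (i : ℝ) * |V m| = ∑ p ∈ range i, |V m| := by simp
      rw [this, ← Finset.sum_add_distrib]
      refine (Finset.abs_sum_le_sum_abs _ _).trans (Finset.sum_le_sum fun p hp => ?_)
      rw [mem_range] at hp
      have h1 := tele hZ (m - p) p
      have e : m - i + 1 + ((i - 1 - p : ℕ) : ℤ) = m - p := by omega
      rw [sub_add_cancel, ← Finset.sum_range_reflect, sub_eq_iff_eq_add, add_comm,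
        ← sub_eq_iff_eq_add] at h1
      rw [e, ← h1]
      refine (abs_sub _ _).trans ?_
      gcongr
      refine (Finset.abs_sum_le_sum_abs _ _).trans ?_
      refine le_trans (Finset.sum_le_sum (g := fun q : ℕ => |Z (m + -q)|) fun q hq => ?_) ?_
      · rw [mem_range] at hq
        refine le_of_eq ?_
        congr 2
        omega
      · refine Finset.sum_le_sum_of_subset_of_nonneg ?_ fun _ _ _ => abs_nonneg _
        exact Finset.range_subset_range.2 hp.le
    · gcongr
      refine cs_short V W ?_ hM0 (by omega) (by omega) (by omega)
      intro m hm
      rw [mem_Icc] at hm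
      exact hM2 m (by omega) (by omega)
  rw [hsplit]
  refine (abs_sub _ _).trans ((add_le_add_left (abs_add_le _ _) _).trans ?_)
  have hzw : (i : ℝ) ^ 2 * (zn * wn) ≤ (k : ℝ) ^ 2 * (zn * wn) := by gcongr
  have hMw : (i : ℝ) * (M * √k * wn) ≤ k * (M * √k * wn) := by gcongr
  linarith

/-- The bound for one value of `k`, obtained by symmetrizing in the two inner summation indices
and applying `pair_bound` to each pair. -/
lemma arc_bound (U V Z W : ℤ → ℝ) (hV : ∀ m, V m = U m - U (m - 1))
    (hZ : ∀ m, Z m = V m - V (m - 1)) (A B : ℤ) (k : ℕ)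
    (hL : A + k ≤ B + 2) (M : ℝ) (hM0 : 0 ≤ M)
    (hM1 : ∀ m, A ≤ m → m + 2 ≤ A + k → |V m| ≤ M)
    (hM2 : ∀ m, B + 1 ≤ m → m + 1 ≤ B + k → |V m| ≤ M) :
    |∑ n ∈ Icc A B, ∑ j ∈ range k,
        ((k : ℝ) * U (n + j) - ∑ t ∈ range k, U (n + t)) * W (n + j)| ≤
      2 * (k : ℝ) ^ 4 * (√(∑ m ∈ Icc A (B + k - 1), Z m ^ 2) *
        √(∑ m ∈ Icc A (B + k - 1), W m ^ 2)) +
      (k : ℝ) ^ 3 * (M * √k * √(∑ m ∈ Icc A (B + k - 1), W m ^ 2)) := by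
  have hsym : ∑ n ∈ Icc A B, ∑ j ∈ range k,
        ((k : ℝ) * U (n + j) - ∑ t ∈ range k, U (n + t)) * W (n + j) =
      (1 / 2) * ∑ j ∈ range k, ∑ t ∈ range k, ∑ n ∈ Icc A B,
        (U (n + j) - U (n + t)) * (W (n + j) - W (n + t)) := by
    have h1 : ∀ n : ℤ, ∑ j ∈ range k,
        ((k : ℝ) * U (n + j) - ∑ t ∈ range k, U (n + t)) * W (n + j) =
        ∑ j ∈ range k, ∑ t ∈ range k, (U (n + j) - U (n + t)) * W (n + j) := by
      intro n
      refine Finset.sum_congr rfl fun j _ => ?_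
      rw [← Finset.sum_mul, Finset.sum_sub_distrib]
      simp
    have h2 : ∀ n : ℤ, ∑ j ∈ range k, ∑ t ∈ range k, (U (n + j) - U (n + t)) * W (n + j) =
        (1 / 2) * ∑ j ∈ range k, ∑ t ∈ range k,
          (U (n + j) - U (n + t)) * (W (n + j) - W (n + t)) := by
      intro n
      have h3 : ∑ j ∈ range k, ∑ t ∈ range k, (U (n + j) - U (n + t)) * W (n + t) =
          -∑ j ∈ range k, ∑ t ∈ range k, (U (n + j) - U (n + t)) * W (n + j) := by
        rw [Finset.sum_comm]
        simp only [← Finset.sum_neg_distrib, ← neg_mul, neg_sub]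
      have h4 : ∑ j ∈ range k, ∑ t ∈ range k,
          (U (n + j) - U (n + t)) * (W (n + j) - W (n + t)) =
          ∑ j ∈ range k, ∑ t ∈ range k, (U (n + j) - U (n + t)) * W (n + j) -
          ∑ j ∈ range k, ∑ t ∈ range k, (U (n + j) - U (n + t)) * W (n + t) := by
        simp only [← Finset.sum_sub_distrib, ← mul_sub]
      rw [h4, h3]
      ring
    simp only [h1, h2]
    rw [← Finset.mul_sum, Finset.sum_comm]
    congr 1
    refine Finset.sum_congr rfl fun j _ => ?_
    rw [Finset.sum_comm]
  set zn := √(∑ m ∈ Icc A (B + k - 1), Z m ^ 2)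
  set wn := √(∑ m ∈ Icc A (B + k - 1), W m ^ 2)
  have hpair : ∀ t j : ℕ, t ≤ j → j < k →
      |∑ n ∈ Icc A B, (U (n + j) - U (n + t)) * (W (n + j) - W (n + t))| ≤
      3 * (k : ℝ) ^ 2 * (zn * wn) + 2 * k * (M * √k * wn) := by
    intro t j htj hj
    obtain ⟨i, rfl⟩ := Nat.exists_eq_add_of_le htj
    have := pair_bound U V Z W hV hZ A B k t i hj (by omega) M hM0 hM1 hM2
    simpa only [Nat.cast_add, add_assoc] using this
  have hall : ∀ j < k, ∀ t < k,
      |∑ n ∈ Icc A B, (U (n + j) - U (n + t)) * (W (n + j) - W (n + t))| ≤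
      3 * (k : ℝ) ^ 2 * (zn * wn) + 2 * k * (M * √k * wn) := by
    intro j hj t ht
    rcases le_total t j with h | h
    · exact hpair t j h hj
    · have := hpair j t h ht
      convert this using 3
      ring
  rw [hsym, abs_mul]
  have hsum : |∑ j ∈ range k, ∑ t ∈ range k, ∑ n ∈ Icc A B,
        (U (n + j) - U (n + t)) * (W (n + j) - W (n + t))| ≤
      ∑ j ∈ range k, ∑ t ∈ range k, (3 * (k : ℝ) ^ 2 * (zn * wn) + 2 * k * (M * √k * wn)) := by
    refine (Finset.abs_sum_le_sum_abs _ _).trans (Finset.sum_le_sum fun j hj => ?_)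
    refine (Finset.abs_sum_le_sum_abs _ _).trans (Finset.sum_le_sum fun t ht => ?_)
    exact hall j (mem_range.1 hj) t (mem_range.1 ht)
  simp only [Finset.sum_const, card_range, nsmul_eq_mul] at hsum
  have hzw : 0 ≤ (k : ℝ) ^ 4 * (zn * wn) := by positivity
  rw [abs_of_pos (by norm_num : (0 : ℝ) < 1 / 2)]
  nlinarith

/-! ### Periodic unwrapping -/

lemma Periodic2N.Dv {N : ℕ} {v : ℤ → ℝ} (h : Periodic2N N v) : Periodic2N N (Dv N v) := by
  intro l
  have e : l + 2 * (N : ℤ) - 1 = l - 1 + 2 * N := by ring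
  simp only [_root_.Dv, h l, e, h (l - 1)]

/-- Two blocks adjacent across the period boundary sum to one interval of the real line. -/
lemma sum_unwrap {N : ℕ} {f : ℤ → ℝ} (hf : Periodic2N N f) {a b : ℤ} (hb : b < a) (ha : a ≤ N + 1)
    (hb' : -N ≤ b) :
    ∑ m ∈ Icc (-(N : ℤ) + 1) b ∪ Icc a N, f m = ∑ m ∈ Icc a (b + 2 * N), f m := by
  rw [Finset.sum_union, sum_Icc_split f (a := a) (b := N) (c := b + 2 * N) (by omega) (by omega),
    add_comm]
  · congr 1
    have e : (N : ℤ) + 1 = -N + 1 + 2 * N := by ring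
    rw [e, ← sum_Icc_shift]
    exact Finset.sum_congr rfl fun m _ => (hf m).symm
  · rw [Finset.disjoint_left]
    intro x
    simp only [mem_Icc]
    omega

lemma Ctil_eq {N k : ℕ} {K : ℤ} (hK : 1 ≤ K) (hKN : K + k ≤ N) (hk : 2 ≤ k) :
    Ctil N K k = Icc (-(N : ℤ) + 1) (-K - 1) ∪ Icc (K + 2) N := by
  ext x
  simp only [Ctil, Cqnl, Iqnl, mem_union, mem_Icc]
  omega

lemma linf_nonneg (S : Finset ℤ) (v : ℤ → ℝ) : 0 ≤ linf S v := by
  refine Real.sSup_nonneg ?_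
  rintro _ ⟨l, _, rfl⟩
  exact abs_nonneg _

lemma abs_le_linf {S : Finset ℤ} (v : ℤ → ℝ) {l : ℤ} (hl : l ∈ S) : |v l| ≤ linf S v :=
  le_csSup (S.finite_toSet.image _).bddAbove ⟨l, hl, rfl⟩

/-- The contribution of a single `k` to the consistency error, before multiplication by `a k`. -/
lemma term_bound {s N k : ℕ} {K : ℤ} (hN : 0 < N) (hK : 1 ≤ K) (hKN : K ≤ (N : ℤ) - s)
    (hk : 2 ≤ k) (hks : k ≤ s) {u w : ℤ → ℝ} (hu : Periodic2N N u) (hw : Periodic2N N w) :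
    eps N * |∑ l ∈ Cqnl N K k, ∑ j ∈ range k,
      ((k : ℝ) * Dv N u (l + j) - ∑ t ∈ range k, Dv N u (l + t)) * Dv N w (l + j)| ≤
    (eps N ^ 2 * (2 * (k : ℝ) ^ 4) * nrmS N (Ctil N K k) (Dv N (Dv N (Dv N u))) +
      eps N * (k : ℝ) ^ 3 * √(2 * s * eps N) * linf (Iqnl K k) (Dv N (Dv N u))) *
      nrm N (Dv N w) := by
  have he : 0 < eps N := by unfold eps; positivity
  have hD : ∀ v : ℤ → ℝ, ∀ m, eps N * Dv N v m = v m - v (m - 1) := fun v m => by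
    unfold Dv
    field_simp
  set e := eps N
  set M := linf (Iqnl K k) (Dv N (Dv N u))
  have hM0 : 0 ≤ M := linf_nonneg _ _
  have hper2 : Periodic2N N (Dv N (Dv N u)) := hu.Dv.Dv
  have hper3 : Periodic2N N (Dv N (Dv N (Dv N u))) := hu.Dv.Dv.Dv
  have hC : ∑ l ∈ Cqnl N K k, ∑ j ∈ range k,
      ((k : ℝ) * Dv N u (l + j) - ∑ t ∈ range k, Dv N u (l + t)) * Dv N w (l + j) =
      ∑ l ∈ Icc (K + 2) (-K - k + 2 * N), ∑ j ∈ range k,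
      ((k : ℝ) * Dv N u (l + j) - ∑ t ∈ range k, Dv N u (l + t)) * Dv N w (l + j) := by
    refine sum_unwrap (f := fun l => ∑ j ∈ range k,
      ((k : ℝ) * Dv N u (l + j) - ∑ t ∈ range k, Dv N u (l + t)) * Dv N w (l + j))
      ?_ (by omega) (by omega) (by omega)
    intro l
    have e1 : ∀ j : ℕ, l + 2 * (N : ℤ) + j = l + j + 2 * N := fun j => by ring
    simp only [e1, hu.Dv _, hw.Dv _]
  have main := arc_bound (Dv N u) (fun m => e * Dv N (Dv N u) m)
    (fun m => e ^ 2 * Dv N (Dv N (Dv N u)) m) (Dv N w) (hD _)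
    (fun m => by rw [sq, mul_assoc, hD, mul_sub]) (K + 2) (-K - k + 2 * N) k (by omega)
    (e * M) (by positivity)
    (fun m h1 h2 => by
      rw [abs_mul, abs_of_pos he]
      gcongr
      refine abs_le_linf _ ?_
      simp only [Iqnl, mem_union, mem_Icc]
      omega)
    (fun m h1 h2 => by
      rw [abs_mul, abs_of_pos he]
      gcongr
      have := hper2 (m - 2 * N)
      rw [sub_add_cancel] at this
      rw [this]
      refine abs_le_linf _ ?_
      simp only [Iqnl, mem_union, mem_Icc]
      omega)
  have hE : -K - (k : ℤ) + 2 * N + k - 1 = -K - 1 + 2 * N := by ring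
  rw [hE] at main
  have hZ : √(∑ m ∈ Icc (K + 2) (-K - 1 + 2 * N), (e ^ 2 * Dv N (Dv N (Dv N u)) m) ^ 2) * √e =
      e ^ 2 * nrmS N (Ctil N K k) (Dv N (Dv N (Dv N u))) := by
    rw [nrmS, nsqS, Ctil_eq hK (by omega) hk,
      sum_unwrap (f := fun m => Dv N (Dv N (Dv N u)) m ^ 2)
        (fun l => by simp only [hper3 l]) (by omega) (by omega) (by omega)]
    simp only [mul_pow (e ^ 2)]
    rw [← Finset.mul_sum, Real.sqrt_mul (sq_nonneg _), Real.sqrt_sq (sq_nonneg _),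
      Real.sqrt_mul he.le]
    ring
  have hW : √(∑ m ∈ Icc (K + 2) (-K - 1 + 2 * N), Dv N w m ^ 2) * √e ≤ nrm N (Dv N w) := by
    rw [nrm, nsq, Real.sqrt_mul he.le, mul_comm]
    refine mul_le_mul_of_nonneg_left (Real.sqrt_le_sqrt ?_) (Real.sqrt_nonneg _)
    rw [← sum_unwrap (f := fun m => Dv N w m ^ 2)
        (fun l => by simp only [hw.Dv l]) (by omega) (by omega) (by omega)]
    refine Finset.sum_le_sum_of_subset_of_nonneg ?_ fun _ _ _ => sq_nonneg _
    intro x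
    simp only [rng, mem_union, mem_Icc]
    omega
  have hks' : √(k : ℝ) * √e ≤ √(2 * s * e) := by
    rw [← Real.sqrt_mul (Nat.cast_nonneg k)]
    have : (k : ℝ) ≤ s := by exact_mod_cast hks
    have : (0 : ℝ) ≤ s := Nat.cast_nonneg s
    gcongr
    linarith
  set zn := √(∑ m ∈ Icc (K + 2) (-K - 1 + 2 * N), (e ^ 2 * Dv N (Dv N (Dv N u)) m) ^ 2)
  set wn := √(∑ m ∈ Icc (K + 2) (-K - 1 + 2 * N), Dv N w m ^ 2)
  have hee : √e * √e = e := Real.mul_self_sqrt he.le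
  rw [hC]
  calc _ ≤ e * (2 * (k : ℝ) ^ 4 * (zn * wn) + (k : ℝ) ^ 3 * (e * M * √k * wn)) := by gcongr
    _ = (2 * (k : ℝ) ^ 4 * (zn * √e) + (k : ℝ) ^ 3 * (e * M * (√k * √e))) * (wn * √e) := by
        linear_combination (-(2 * (k : ℝ) ^ 4 * (zn * wn) + (k : ℝ) ^ 3 * (e * M * √k * wn))) * hee
    _ ≤ (2 * (k : ℝ) ^ 4 * (zn * √e) + (k : ℝ) ^ 3 * (e * M * √(2 * s * e))) *
          nrm N (Dv N w) := by gcongr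
    _ = _ := by
        rw [hZ]
        ring

/-- negative-norm estimate of the consistency error (ℓ∞ interface version). -/
theorem consistency_error_estimate_linf (s : ℕ) (hs : 2 ≤ s) :
    ∃ C₁ C₂ : ℕ → ℝ,
      (∀ k, 2 ≤ k → k ≤ s → 0 < C₁ k ∧ 0 < C₂ k) ∧
      ∀ (N : ℕ), 0 < N → ∀ (K : ℤ), 1 ≤ K → K ≤ (N : ℤ) - (s : ℤ) →
      ∀ (a : ℕ → ℝ) (u w : ℤ → ℝ), memU N u → memU N w →
        |Tconsist N s K a u w| ≤
          ((∑ k ∈ Finset.Icc 2 s,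
              (eps N) ^ 2 * C₁ k * |a k| * nrmS N (Ctil N K k) (Dv N (Dv N (Dv N u))))
            + ∑ k ∈ Finset.Icc 2 s,
                eps N * C₂ k * |a k| * Real.sqrt (2 * (s : ℝ) * eps N)
                  * linf (Iqnl K k) (Dv N (Dv N u)))
            * nrm N (Dv N w) := by
  refine ⟨fun k => 2 * (k : ℝ) ^ 4, fun k => (k : ℝ) ^ 3, ?_, ?_⟩
  · intro k hk _
    have : (0 : ℝ) < k := by exact_mod_cast (by omega : 0 < k)
    constructor <;> positivity
  intro N hN K hK hKN a u w hu hw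
  have he : 0 < eps N := by unfold eps; positivity
  rw [Tconsist, Finset.mul_sum, ← Finset.sum_add_distrib, Finset.sum_mul]
  refine (Finset.abs_sum_le_sum_abs _ _).trans (Finset.sum_le_sum fun k hk => ?_)
  rw [Finset.mem_Icc] at hk
  rw [abs_mul, abs_mul, abs_of_pos he, mul_left_comm]
  refine (mul_le_mul_of_nonneg_left (term_bound hN hK hKN hk.1 hk.2 hu.1 hw.1)
    (abs_nonneg (a k))).trans_eq ?_
  ring
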